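/- For every integer τ > 2 and every prime power q with q ≥ ⌈(τ+1)/2⌉, there exists a (2, τ) streaming code over F_q of rate (τ−1)/(τ+1), which is the optimal rate of a (2,τ) SC. (This improves the field-size requirement for rate-optimal (a=2,τ) streaming codes from q ≥ τ to q ≥ ⌈(τ+1)/2⌉.) -/

import Mathlib

/-- A packet-level code with a causal systematic encoder: the parity part of the
coded packet at time `t` is a fixed function of the message packets at times `≤ t`. -/
structure PacketCode (F : Type) (k n : ℕ) where
  parity : (ℤ → Fin k → F) → ℤ → Fin (n - k) → F
  causal : ∀ (m m' : ℤ → Fin k → F) (t : ℤ),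
    (∀ t' ≤ t, m t' = m' t') → parity m t = parity m' t

/-- A valid message stream vanishes at negative times. -/
def IsMsgStream {F : Type} [Zero F] {k : ℕ} (m : ℤ → Fin k → F) : Prop :=
  ∀ t < 0, m t = 0

/-- `(a, τ)` streaming-code property. -/
def IsSC {F : Type} [Zero F] {k n : ℕ} (C : PacketCode F k n) (a τ : ℕ) : Prop :=
  ∀ m m' : ℤ → Fin k → F, IsMsgStream m → IsMsgStream m' →
    ∀ t : ℤ, 0 ≤ t →
      ∀ E : Finset ℤ, (∀ x ∈ E, t ≤ x ∧ x ≤ t + τ) → t ∈ E → E.card ≤ a →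
        (∀ t' < t, m t' = m' t') →
        (∀ t' : ℤ, t ≤ t' → t' ≤ t + τ → t' ∉ E →
          m t' = m' t' ∧ C.parity m t' = C.parity m' t') →
        m t = m' t

/-- `(a, τ, r)` locally recoverable streaming code. -/
def IsLRSC {F : Type} [Zero F] {k n : ℕ} (C : PacketCode F k n) (a τ r : ℕ) : Prop :=
  IsSC C a τ ∧ IsSC C 1 r

/-!
For optimality, take two message streams that differ only at times `0, …, a - 1` and whose parities
agree at times `a, …, τ`. The property of an `(a, τ)` streaming code, applied at times `0`, `1`, …
in turn, shows that the streams are equal. So the parities at `τ + 1 - a` times determine `a`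
message packets, and counting gives the bound `(τ + 1 - a) / (τ + 1)` on the rate.

For existence, use two parities, each a sum of one symbol from every message position taken along a
diagonal: position `i` enters parity `ℓ` with its own delay in `1, …, τ`. The `τ - 1` positions are
split into two groups of sizes `u` and `v`. Parity `0` has delays `1, …, u` on the first group and
`u + 2, …, τ` on the second; parity `1` has delays `1, …, v` on the second group and `v + 2, …, τ`
on the first. Suppose the packets at times `t` and `t + j` are lost and consider a symbol of the
first group at time `t`, with delay `e` in parity `0`.
* If `e < j`, the symbol is the only lost one in its parity `0`, which arrives before time `t + j`.
* If `e = j`, parity `0` is lost, but in parity `1` a symbol of time `t + j` could interfere only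
  with delay `v + 1`, which does not occur.
* If `e > j`, both parities pair the symbol with the same symbol of the first group at time `t + j`,
  and the resulting `2 × 2` system is invertible as soon as the coefficient ratios are distinct.

Symbols of different groups never have to be separated in this way, so the ratios can be reused. For
groups of nearly equal size, `⌊τ / 2⌋` nonzero field elements are enough.
-/

section RateBound

variable {F : Type} [Zero F] {k n a τ : ℕ} {C : PacketCode F k n}

theorem IsSC.eq_of_forall_parity_eq (hC : IsSC C a τ) {m m' : ℤ → Fin k → F}
    (hm : IsMsgStream m) (hm' : IsMsgStream m') (hmsg : ∀ s : ℤ, a ≤ s → m s = m' s)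
    (hpar : ∀ s : ℤ, a ≤ s → s ≤ τ → C.parity m s = C.parity m' s) (i : ℕ) (hi : i < a) :
    m i = m' i := by
  induction i using Nat.strong_induction_on with
  | _ i recovered =>
    have past_eq (s : ℤ) (hs : s < i) : m s = m' s := by
      rcases lt_or_ge s 0 with hneg | hnonneg
      · rw [hm s hneg, hm' s hneg]
      · lift s to ℕ using hnonneg
        exact recovered s (by omega) (by omega)
    -- Packets after time `τ` are counted as erased, since their parities are not known to agree.
    let E : Finset ℤ := {s ∈ Finset.Icc (i : ℤ) (i + τ) | s < a ∨ τ < s}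
    have card_E : E.card ≤ a := calc
      E.card ≤ (Finset.Ico (i : ℤ) a ∪ Finset.Ico (τ + 1 : ℤ) (τ + 1 + i)).card := by
        refine Finset.card_le_card fun s hs => ?_
        simp only [E, Finset.mem_filter, Finset.mem_Icc, Finset.mem_union, Finset.mem_Ico] at hs ⊢
        omega
      _ ≤ (Finset.Ico (i : ℤ) a).card + (Finset.Ico (τ + 1 : ℤ) (τ + 1 + i)).card :=
        Finset.card_union_le _ _
      _ = a := by
        rw [Int.card_Ico, Int.card_Ico]
        omega
    refine hC m m' hm hm' i (by omega) E (fun s hs => ?_) ?_ card_E past_eq fun s his hsτ hsE => ?_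
    · exact Finset.mem_Icc.mp (Finset.mem_filter.mp hs).1
    · simp only [E, Finset.mem_filter, Finset.mem_Icc]
      omega
    · simp only [E, Finset.mem_filter, Finset.mem_Icc] at hsE
      exact ⟨hmsg s (by omega), hpar s (by omega) (by omega)⟩

/-- The message stream with packets `x 0, …, x (a - 1)` at times `0, …, a - 1` and zero packets at
all other times. -/
noncomputable def burstStream (x : Fin a → Fin k → F) : ℤ → Fin k → F :=
  Function.extend (fun i : Fin a => (i : ℤ)) x 0

theorem burstStream_coe (x : Fin a → Fin k → F) (i : Fin a) : burstStream x (i : ℕ) = x i :=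
  (Nat.cast_injective.comp Fin.val_injective).extend_apply x 0 i

theorem burstStream_eq_zero (x : Fin a → Fin k → F) {s : ℤ} (hs : s < 0 ∨ a ≤ s) :
    burstStream x s = 0 := by
  refine Function.extend_apply' (f := fun i : Fin a => (i : ℤ)) x 0 s ?_
  rintro ⟨i, rfl⟩
  omega

theorem isMsgStream_burstStream (x : Fin a → Fin k → F) : IsMsgStream (burstStream x) :=
  fun _ hs => burstStream_eq_zero x (.inl hs)

theorem IsSC.injective_parity_burstStream (hC : IsSC C a τ) :
    Function.Injective fun (x : Fin a → Fin k → F) (j : Fin (τ + 1 - a)) =>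
      C.parity (burstStream x) (a + j) := by
  intro x y hxy
  have parity_eq (s : ℤ) (has : a ≤ s) (hsτ : s ≤ τ) :
      C.parity (burstStream x) s = C.parity (burstStream y) s := by
    obtain ⟨j, rfl⟩ := Int.le.dest has
    exact congrFun hxy ⟨j, by omega⟩
  funext i
  rw [← burstStream_coe x i, ← burstStream_coe y i]
  refine hC.eq_of_forall_parity_eq (isMsgStream_burstStream x) (isMsgStream_burstStream y)
    (fun s hs => ?_) parity_eq i i.isLt
  rw [burstStream_eq_zero x (.inr hs), burstStream_eq_zero y (.inr hs)]

variable [Finite F] [Nontrivial F]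

theorem IsSC.mul_le_mul (hC : IsSC C a τ) : k * a ≤ (n - k) * (τ + 1 - a) := by
  have card_le := Nat.card_le_card_of_injective _ hC.injective_parity_burstStream
  simp only [Nat.card_fun, Nat.card_fin, ← pow_mul] at card_le
  exact (Nat.pow_le_pow_iff_right Finite.one_lt_card).mp card_le

theorem IsSC.rate_le (hC : IsSC C a τ) (hkn : k < n) (ha : a ≤ τ + 1) :
    (k : ℚ) / n ≤ ((τ : ℚ) + 1 - a) / (τ + 1) := by
  have hmul : (k : ℚ) * a ≤ (n - k) * (τ + 1 - a) := by
    have := hC.mul_le_mul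
    qify [hkn.le, ha] at this
    exact this
  have hn : (0 : ℚ) < n := by exact_mod_cast hkn.pos
  rw [div_le_div_iff₀ hn (by positivity)]
  linarith

end RateBound

section Diagonal

variable {ι κ : Type*} [Fintype ι]

/-- The parity symbol at time `s` that combines the message symbols in the positions `i`, delayed by
`d i` and weighted by `c i`. -/
def diagonalParity {F : Type*} [NonUnitalNonAssocSemiring F] (d : ι → ℕ) (c : ι → F)
    (m : ℤ → ι → F) (s : ℤ) : F :=
  ∑ i, c i * m (s - d i) i

theorem diagonalParity_congr {F : Type*} [NonUnitalNonAssocSemiring F] (d : ι → ℕ) (c : ι → F)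
    {m m' : ℤ → ι → F} {s : ℤ} (h : ∀ s' ≤ s, m s' = m' s') :
    diagonalParity d c m s = diagonalParity d c m' s :=
  Finset.sum_congr rfl fun i _ => by rw [h _ (by omega)]

theorem diagonalParity_sub {F : Type*} [NonUnitalNonAssocRing F] (d : ι → ℕ) (c : ι → F)
    (m m' : ℤ → ι → F) (s : ℤ) :
    diagonalParity d c (m - m') s = diagonalParity d c m s - diagonalParity d c m' s := by
  simp only [diagonalParity, Pi.sub_apply, mul_sub, Finset.sum_sub_distrib]

section TwoErasures

variable {F : Type*} [NonUnitalNonAssocSemiring F] {d : ι → ℕ} {c : ι → F} {D : ℤ → ι → F} {t : ℤ}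
  {j : ℕ} {i : ι}

theorem diagonalParity_eq_mul (hd : Function.Injective d)
    (hD : ∀ s ≤ t + d i, s ≠ t → s ≠ t + j → D s = 0) (hi : ∀ i', d i' + j ≠ d i) :
    diagonalParity d c D (t + d i) = c i * D t i := by
  rw [diagonalParity, Fintype.sum_eq_single i, add_sub_cancel_right]
  intro i' hne
  have delay_ne : d i' ≠ d i := hd.ne hne
  have := hi i'
  rw [hD _ (by omega) (by omega) (by omega), Pi.zero_apply, mul_zero]

theorem diagonalParity_eq_mul_add_mul (hd : Function.Injective d) (hj : 1 ≤ j)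
    (hD : ∀ s ≤ t + d i, s ≠ t → s ≠ t + j → D s = 0) {i' : ι} (hi' : d i' + j = d i) :
    diagonalParity d c D (t + d i) = c i * D t i + c i' * D (t + j) i' := by
  have hne : i ≠ i' := by
    rintro rfl
    omega
  have second_time : t + (d i : ℤ) - d i' = t + j := by omega
  rw [diagonalParity, Fintype.sum_eq_add i i' hne, add_sub_cancel_right, second_time]
  rintro x ⟨hxi, hxi'⟩
  have delay_ne : d x ≠ d i := hd.ne hxi
  have delay_ne' : d x ≠ d i' := hd.ne hxi'
  rw [hD _ (by omega) (by omega) (by omega), Pi.zero_apply, mul_zero]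

end TwoErasures

/-- A criterion on the delays `d ℓ` and coefficients `c ℓ` of a family of diagonal parities for
recovering symbol `i` of a packet erased together with the packet `j` time units later: either some
available parity contains no other erased symbol, or two parities contain the same second erased
symbol, with linearly independent coefficients. -/
def IsRecoverable {F : Type*} [MulZeroClass F] (d : κ → ι → ℕ) (c : κ → ι → F) (j : ℕ) (i : ι) :
    Prop :=
  (∃ ℓ, c ℓ i ≠ 0 ∧ d ℓ i ≠ j ∧ ∀ i', d ℓ i' + j ≠ d ℓ i) ∨
  ∃ ℓ₁ ℓ₂ i', d ℓ₁ i' + j = d ℓ₁ i ∧ d ℓ₂ i' + j = d ℓ₂ i ∧ c ℓ₁ i * c ℓ₂ i' ≠ c ℓ₂ i * c ℓ₁ i'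

theorem IsRecoverable.eq_zero {F : Type*} [CommRing F] [NoZeroDivisors F] {d : κ → ι → ℕ}
    {c : κ → ι → F} {D : ℤ → ι → F} {t : ℤ} {j : ℕ} {i : ι} (hi : IsRecoverable d c j i)
    (hj : 1 ≤ j) (hd : ∀ ℓ, Function.Injective (d ℓ)) (hpos : ∀ ℓ i, 1 ≤ d ℓ i)
    (hD : ∀ ℓ, ∀ s ≤ t + d ℓ i, s ≠ t → s ≠ t + j → D s = 0)
    (hpar : ∀ ℓ, d ℓ i ≠ j → diagonalParity (d ℓ) (c ℓ) D (t + d ℓ i) = 0) :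
    D t i = 0 := by
  rcases hi with ⟨ℓ, hc, hne, halone⟩ | ⟨ℓ₁, ℓ₂, i', h₁, h₂, hdet⟩
  · have eqn := hpar ℓ hne
    rw [diagonalParity_eq_mul (hd ℓ) (hD ℓ) halone] at eqn
    exact (mul_eq_zero.mp eqn).resolve_left hc
  · have eqn (ℓ : κ) (h : d ℓ i' + j = d ℓ i) : c ℓ i * D t i + c ℓ i' * D (t + j) i' = 0 := by
      have := hpos ℓ i'
      rw [← diagonalParity_eq_mul_add_mul (hd ℓ) hj (hD ℓ) h]
      exact hpar ℓ (by omega)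
    have det_mul : (c ℓ₁ i * c ℓ₂ i' - c ℓ₂ i * c ℓ₁ i') * D t i = 0 := by
      linear_combination c ℓ₂ i' * eqn ℓ₁ h₁ - c ℓ₁ i' * eqn ℓ₂ h₂
    exact (mul_eq_zero.mp det_mul).resolve_left (sub_ne_zero.mpr hdet)

end Diagonal

section DiagonalCode

variable {F : Type} {k r : ℕ}

/-- The packet code whose parity symbols are `r` diagonal parities with delays `d ℓ` and
coefficients `c ℓ`. -/
def diagonalCode [NonUnitalNonAssocSemiring F] (d : Fin r → Fin k → ℕ) (c : Fin r → Fin k → F) :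
    PacketCode F k (k + r) where
  parity m s ℓ :=
    let ℓ' := ℓ.cast (Nat.add_sub_cancel_left k r)
    diagonalParity (d ℓ') (c ℓ') m s
  causal _ _ _ h := funext fun _ => diagonalParity_congr _ _ h

theorem diagonalParity_eq_of_diagonalCode_parity_eq [NonUnitalNonAssocSemiring F]
    {d : Fin r → Fin k → ℕ} {c : Fin r → Fin k → F} {m m' : ℤ → Fin k → F} {s : ℤ}
    (h : (diagonalCode d c).parity m s = (diagonalCode d c).parity m' s) (ℓ : Fin r) :
    diagonalParity (d ℓ) (c ℓ) m s = diagonalParity (d ℓ) (c ℓ) m' s :=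
  congrFun h (ℓ.cast (Nat.add_sub_cancel_left k r).symm)

theorem exists_forall_mem_eq_or_eq_add {E : Finset ℤ} {t : ℤ} (hE : ∀ s ∈ E, t ≤ s) (ht : t ∈ E)
    (hcard : E.card ≤ 2) : ∃ j : ℕ, 1 ≤ j ∧ ∀ s ∈ E, s = t ∨ s = t + j := by
  obtain ⟨e, he⟩ : ∃ e, E.erase t ⊆ {e} := by
    rw [← Finset.card_le_one_iff_subset_singleton, Finset.card_erase_of_mem ht]
    omega
  refine ⟨max 1 (e - t).toNat, le_max_left _ _, fun s hs => or_iff_not_imp_left.mpr fun hst => ?_⟩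
  have hse : s = e := Finset.mem_singleton.mp (he (Finset.mem_erase.mpr ⟨hst, hs⟩))
  have := hE s hs
  omega

theorem isSC_two_diagonalCode [CommRing F] [NoZeroDivisors F] {τ : ℕ} {d : Fin r → Fin k → ℕ}
    {c : Fin r → Fin k → F} (hd : ∀ ℓ, Function.Injective (d ℓ))
    (hdτ : ∀ ℓ i, d ℓ i ∈ Set.Icc 1 τ) (hrec : ∀ j, 1 ≤ j → ∀ i, IsRecoverable d c j i) :
    IsSC (diagonalCode d c) 2 τ := by
  intro m m' _ _ t _ E hE htE hcard hpast hwindow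
  obtain ⟨j, hj, hEj⟩ := exists_forall_mem_eq_or_eq_add (fun s hs => (hE s hs).1) htE hcard
  have not_erased {s : ℤ} (hst : s ≠ t) (hsj : s ≠ t + j) : s ∉ E :=
    fun hs => (hEj s hs).elim hst hsj
  have sub_eq_zero_of_ne (s : ℤ) (hs : s ≤ t + τ) (hst : s ≠ t) (hsj : s ≠ t + j) :
      (m - m') s = 0 := by
    rw [Pi.sub_apply, sub_eq_zero]
    rcases lt_or_ge s t with hlt | hge
    · exact hpast s hlt
    · exact (hwindow s hge hs (not_erased hst hsj)).1
  funext i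
  have time_le (ℓ : Fin r) : t + (d ℓ i : ℤ) ≤ t + τ := by
    have := (hdτ ℓ i).2
    omega
  rw [← sub_eq_zero]
  refine (hrec j hj i).eq_zero (D := m - m') hj hd (fun ℓ i => (hdτ ℓ i).1)
    (fun ℓ s hs => sub_eq_zero_of_ne s (hs.trans (time_le ℓ))) fun ℓ hℓ => ?_
  have := (hdτ ℓ i).1
  have parity_eq := (hwindow (t + d ℓ i) (by omega) (time_le ℓ)
    (not_erased (by omega) (by omega))).2
  rw [diagonalParity_sub, diagonalParity_eq_of_diagonalCode_parity_eq parity_eq ℓ, sub_self]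

end DiagonalCode

section TwoGroup

variable {u v : ℕ}

/-- The delays of two parities on message positions split into groups of sizes `u` and `v`: parity
`0` omits the delay `u + 1` and parity `1` the delay `v + 1`. -/
def twoGroupDelay (u v : ℕ) : Fin 2 → Fin (u + v) → ℕ :=
  ![Fin.append (fun i : Fin u => i + 1) (fun i : Fin v => u + 2 + i),
    Fin.append (fun i : Fin u => v + 2 + i) (fun i : Fin v => i + 1)]

/-- The coefficients of two parities on message positions split into two groups: the ratio of the
coefficients in parities `0` and `1` is `α` on the first group and `β⁻¹` on the second. -/
def twoGroupCoeff {F : Type*} [One F] (α : Fin u → F) (β : Fin v → F) : Fin 2 → Fin (u + v) → F :=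
  ![Fin.append α 1, Fin.append 1 β]

theorem twoGroupDelay_zero_castAdd (i : Fin u) : twoGroupDelay u v 0 (i.castAdd v) = i + 1 := by
  simp [twoGroupDelay]

theorem twoGroupDelay_zero_natAdd (i : Fin v) : twoGroupDelay u v 0 (i.natAdd u) = u + 2 + i := by
  simp [twoGroupDelay]

theorem twoGroupDelay_one_castAdd (i : Fin u) : twoGroupDelay u v 1 (i.castAdd v) = v + 2 + i := by
  simp [twoGroupDelay]

theorem twoGroupDelay_one_natAdd (i : Fin v) : twoGroupDelay u v 1 (i.natAdd u) = i + 1 := by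
  simp [twoGroupDelay]

theorem twoGroupDelay_zero_ne (i : Fin (u + v)) : twoGroupDelay u v 0 i ≠ u + 1 := by
  induction i using Fin.addCases <;>
    simp only [twoGroupDelay_zero_castAdd, twoGroupDelay_zero_natAdd] <;> omega

theorem twoGroupDelay_one_ne (i : Fin (u + v)) : twoGroupDelay u v 1 i ≠ v + 1 := by
  induction i using Fin.addCases <;>
    simp only [twoGroupDelay_one_castAdd, twoGroupDelay_one_natAdd] <;> omega

theorem twoGroupDelay_mem_Icc (ℓ : Fin 2) (i : Fin (u + v)) :
    twoGroupDelay u v ℓ i ∈ Set.Icc 1 (u + v + 1) := by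
  rw [Set.mem_Icc]
  obtain rfl | rfl : ℓ = 0 ∨ ℓ = 1 := by omega
  all_goals
    induction i using Fin.addCases <;>
      simp only [twoGroupDelay_zero_castAdd, twoGroupDelay_zero_natAdd, twoGroupDelay_one_castAdd,
        twoGroupDelay_one_natAdd] <;> omega

theorem twoGroupDelay_injective (ℓ : Fin 2) : Function.Injective (twoGroupDelay u v ℓ) := by
  intro i i' h
  rw [Fin.ext_iff]
  obtain rfl | rfl : ℓ = 0 ∨ ℓ = 1 := by omega
  all_goals
    induction i using Fin.addCases <;> induction i' using Fin.addCases <;>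
      simp only [twoGroupDelay_zero_castAdd, twoGroupDelay_zero_natAdd, twoGroupDelay_one_castAdd,
        twoGroupDelay_one_natAdd, Fin.val_castAdd, Fin.val_natAdd] at h ⊢ <;> omega

section Coeff

variable {F : Type*} [One F] (α : Fin u → F) (β : Fin v → F)

theorem twoGroupCoeff_zero_castAdd (i : Fin u) : twoGroupCoeff α β 0 (i.castAdd v) = α i :=
  Fin.append_left _ _ i

theorem twoGroupCoeff_zero_natAdd (i : Fin v) : twoGroupCoeff α β 0 (i.natAdd u) = 1 :=
  Fin.append_right _ _ i

theorem twoGroupCoeff_one_castAdd (i : Fin u) : twoGroupCoeff α β 1 (i.castAdd v) = 1 :=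
  Fin.append_left _ _ i

theorem twoGroupCoeff_one_natAdd (i : Fin v) : twoGroupCoeff α β 1 (i.natAdd u) = β i :=
  Fin.append_right _ _ i

end Coeff

variable {F : Type*} [MulZeroOneClass F] [Nontrivial F] {α : Fin u → F} {β : Fin v → F} {j : ℕ}

theorem isRecoverable_twoGroup_castAdd (hα : Function.Injective α) (hα₀ : ∀ i, α i ≠ 0)
    (hj : 1 ≤ j) (i : Fin u) :
    IsRecoverable (twoGroupDelay u v) (twoGroupCoeff α β) j (i.castAdd v) := by
  rcases lt_trichotomy (i + 1 : ℕ) j with hlt | heq | hgt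
  · refine .inl ⟨0, ?_, ?_, fun i' => ?_⟩
    · exact (twoGroupCoeff_zero_castAdd α β i).symm ▸ hα₀ i
    all_goals rw [twoGroupDelay_zero_castAdd]; omega
  · refine .inl ⟨1, ?_, ?_, fun i' => ?_⟩
    · exact (twoGroupCoeff_one_castAdd α β i).symm ▸ one_ne_zero
    all_goals rw [twoGroupDelay_one_castAdd]
    · omega
    · have gap := twoGroupDelay_one_ne i'
      omega
  · let i' : Fin u := ⟨i - j, by omega⟩
    have val_i' : (i' : ℕ) = i - j := rfl
    have hne : i ≠ i' := Fin.ne_of_val_ne (by omega)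
    refine .inr ⟨0, 1, i'.castAdd v, ?_, ?_, ?_⟩
    · simp only [twoGroupDelay_zero_castAdd]
      omega
    · simp only [twoGroupDelay_one_castAdd]
      omega
    · simpa only [twoGroupCoeff_zero_castAdd, twoGroupCoeff_one_castAdd, mul_one, one_mul]
        using hα.ne hne

theorem isRecoverable_twoGroup_natAdd (hβ : Function.Injective β) (hβ₀ : ∀ i, β i ≠ 0)
    (hj : 1 ≤ j) (i : Fin v) :
    IsRecoverable (twoGroupDelay u v) (twoGroupCoeff α β) j (i.natAdd u) := by
  rcases lt_trichotomy (i + 1 : ℕ) j with hlt | heq | hgt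
  · refine .inl ⟨1, ?_, ?_, fun i' => ?_⟩
    · exact (twoGroupCoeff_one_natAdd α β i).symm ▸ hβ₀ i
    all_goals rw [twoGroupDelay_one_natAdd]; omega
  · refine .inl ⟨0, ?_, ?_, fun i' => ?_⟩
    · exact (twoGroupCoeff_zero_natAdd α β i).symm ▸ one_ne_zero
    all_goals rw [twoGroupDelay_zero_natAdd]
    · omega
    · have gap := twoGroupDelay_zero_ne i'
      omega
  · let i' : Fin v := ⟨i - j, by omega⟩
    have val_i' : (i' : ℕ) = i - j := rfl
    have hne : i ≠ i' := Fin.ne_of_val_ne (by omega)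
    refine .inr ⟨1, 0, i'.natAdd u, ?_, ?_, ?_⟩
    · simp only [twoGroupDelay_one_natAdd]
      omega
    · simp only [twoGroupDelay_zero_natAdd]
      omega
    · simpa only [twoGroupCoeff_one_natAdd, twoGroupCoeff_zero_natAdd, mul_one, one_mul]
        using hβ.ne hne

theorem isSC_two_diagonalCode_twoGroup {F : Type} [CommRing F] [IsDomain F] {α : Fin u → F}
    {β : Fin v → F} (hα : Function.Injective α) (hα₀ : ∀ i, α i ≠ 0) (hβ : Function.Injective β)
    (hβ₀ : ∀ i, β i ≠ 0) :
    IsSC (diagonalCode (twoGroupDelay u v) (twoGroupCoeff α β)) 2 (u + v + 1) :=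
  isSC_two_diagonalCode twoGroupDelay_injective twoGroupDelay_mem_Icc fun _ hj =>
    Fin.addCases (isRecoverable_twoGroup_castAdd hα hα₀ hj)
      (isRecoverable_twoGroup_natAdd hβ hβ₀ hj)

end TwoGroup

theorem exists_injective_forall_ne_zero {F : Type*} [AddGroup F] {v : ℕ}
    (hv : (v + 1 : ℕ) ≤ Cardinal.mk F) :
    ∃ g : Fin v → F, Function.Injective g ∧ ∀ i, g i ≠ 0 := by
  obtain ⟨e⟩ : Nonempty (Fin (v + 1) ↪ F) := by
    rwa [← Cardinal.lift_mk_le', Cardinal.mk_fin, Cardinal.lift_natCast, Cardinal.lift_uzero]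
  refine ⟨fun i => e i.succ - e 0, fun i i' h => ?_, fun i => ?_⟩
  · exact Fin.succ_injective v (e.injective (sub_left_injective h))
  · exact sub_ne_zero.mpr (e.injective.ne i.succ_ne_zero)

theorem exists_isSC_two {F : Type} [CommRing F] [IsDomain F] {τ : ℕ} (hτ : 1 ≤ τ)
    (hF : ((τ + 2) / 2 : ℕ) ≤ Cardinal.mk F) :
    ∃ C : PacketCode F (τ - 1) (τ + 1), IsSC C 2 τ := by
  obtain ⟨u, v, huv, hτuv, hv⟩ : ∃ u v, u ≤ v ∧ τ = u + v + 1 ∧ (τ + 2) / 2 = v + 1 :=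
    ⟨τ - 1 - τ / 2, τ / 2, by omega, by omega, by omega⟩
  rw [hv] at hF
  subst hτuv
  obtain ⟨g, hg, hg₀⟩ := exists_injective_forall_ne_zero hF
  exact ⟨_, isSC_two_diagonalCode_twoGroup (hg.comp (Fin.castLE_injective huv))
    (fun i => hg₀ (i.castLE huv)) hg hg₀⟩

theorem exists_field_card_eq {q : ℕ} (hq : IsPrimePow q) :
    ∃ (F : Type) (_ : Field F) (_ : Fintype F), Fintype.card F = q := by
  rw [← Fintype.card_fin q] at hq
  obtain ⟨field⟩ := Fintype.nonempty_field_iff.mpr hq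
  exact ⟨Fin q, field, inferInstance, Fintype.card_fin q⟩

theorem two_tau_SC_small_field_general (τ : ℕ) (hτ : 2 ≤ τ) :
    (∀ (F : Type) [CommRing F] [IsDomain F], ((τ + 2) / 2 : ℕ) ≤ Cardinal.mk F →
        ∃ C : PacketCode F (τ - 1) (τ + 1), IsSC C 2 τ) ∧
    (∀ (F : Type) [Zero F] [Finite F] [Nontrivial F] (k n : ℕ) (C : PacketCode F k n),
        k < n → IsSC C 2 τ → (k : ℚ) / n ≤ ((τ : ℚ) - 1) / ((τ : ℚ) + 1)) := by
  refine ⟨fun F _ _ hF => exists_isSC_two (by omega) hF, fun F _ _ _ k n C hkn hC => ?_⟩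
  have rate_le := hC.rate_le hkn (by omega)
  rwa [Nat.cast_two, show (τ : ℚ) + 1 - 2 = τ - 1 by ring] at rate_le

/-- For every `τ > 2` and every prime power `q ≥ ⌈(τ+1)/2⌉`, there exists a
`(2, τ)` streaming code over `F_q` with `k = τ-1`, `n = τ+1`, i.e. of rate
`(τ-1)/(τ+1)`; moreover `(τ-1)/(τ+1)` is the optimal rate of a `(2,τ)` SC. -/
theorem two_tau_SC_small_field (τ q : ℕ) (hτ : 2 < τ) (hq : IsPrimePow q)
    (hqsize : (τ + 2) / 2 ≤ q) :
    (∃ (F : Type) (_ : Field F) (_ : Fintype F),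
        Fintype.card F = q ∧
        ∃ C : PacketCode F (τ - 1) (τ + 1), IsSC C 2 τ) ∧
    (∀ (F : Type) [Field F] [Fintype F] (k n : ℕ) (C : PacketCode F k n),
        1 ≤ k → k < n → IsSC C 2 τ →
        (k : ℚ) / n ≤ ((τ : ℚ) - 1) / ((τ : ℚ) + 1)) := by
  obtain ⟨exists_code, rate_le⟩ := two_tau_SC_small_field_general τ hτ.le
  obtain ⟨F, _, _, rfl⟩ := exists_field_card_eq hq
  exact ⟨⟨F, _, _, rfl, exists_code F (by rw [Cardinal.mk_fintype]; exact_mod_cast hqsize)⟩,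
    fun F _ _ k n C _ hkn hC => rate_le F k n C hkn hC⟩
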